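/- arXiv:2403.06615 — 2 statements merged into one kernel-verified Lean document; each statement's English description precedes it below -/
import Mathlib

section
/- Let X,Y be independent random vectors on ℝ^m such that X+Y and X−Y are independent. Then X and Y are Gaussian (Bernstein's theorem). -/
open MeasureTheory ProbabilityTheory
open scoped RealInnerProductSpace NNReal

/-- A measure on `ℝᵐ` is Gaussian (possibly degenerate) if every one-dimensional linear
projection of it is a (possibly degenerate) Gaussian on `ℝ`. -/
def IsGaussianMeasure {m : ℕ} (ν : Measure (EuclideanSpace ℝ (Fin m))) : Prop :=
  ∀ u : EuclideanSpace ℝ (Fin m), ∃ (a : ℝ) (v : ℝ≥0),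
    ν.map (fun x => ⟪u, x⟫) = gaussianReal a v

lemma bern_quad (φ : ℝ → ℝ) (hc : Continuous φ)
    (h : ∀ s t, φ (s + t) + φ (s - t) = 2 * φ s + 2 * φ t) :
    ∀ t, φ t = φ 1 * t ^ 2 := by
  have h0 : φ 0 = 0 := by have := h 0 0; simp at this; linarith
  have heven : ∀ t, φ (-t) = φ t := by
    intro t; have := h 0 t; simp [h0] at this; linarith
  have hnat : ∀ (t : ℝ) (n : ℕ), φ (n * t) = n ^ 2 * φ t ∧ φ ((n + 1 : ℕ) * t) = ((n + 1 : ℕ) : ℝ) ^ 2 * φ t := by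
    intro t n
    induction n with
    | zero => simp [h0]
    | succ n ih =>
      refine ⟨ih.2, ?_⟩
      have := h ((n + 1 : ℕ) * t) t
      rw [ih.2, show ((n + 1 : ℕ) : ℝ) * t - t = n * t by push_cast; ring, ih.1,
        show ((n + 1 : ℕ) : ℝ) * t + t = (n + 1 + 1 : ℕ) * t by push_cast; ring] at this
      push_cast at this ⊢
      linarith
  have hint : ∀ (t : ℝ) (n : ℤ), φ (n * t) = n ^ 2 * φ t := by
    intro t n
    obtain ⟨k, rfl | rfl⟩ := n.eq_nat_or_neg
    · exact_mod_cast (hnat t k).1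
    · have := (hnat t k).1
      push_cast
      rw [neg_mul, heven, this]; ring
  have hrat : ∀ q : ℚ, φ q = φ 1 * (q : ℝ) ^ 2 := by
    intro q
    have hd : (q.den : ℝ) ≠ 0 := by exact_mod_cast q.den_ne_zero
    have h1 := (hnat (q : ℝ) q.den).1
    have h2 := hint 1 q.num
    have h3 : (q.den : ℝ) * q = q.num := by
      exact_mod_cast Rat.den_mul_eq_num q
    rw [h3] at h1
    rw [mul_one, h1, ← h3] at h2
    have : (q.den : ℝ) ^ 2 ≠ 0 := pow_ne_zero _ hd
    apply mul_left_cancel₀ this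
    rw [h2]; ring
  have := Rat.isDenseEmbedding_coe_real.dense.equalizer hc
    (show Continuous fun t : ℝ => φ 1 * t ^ 2 by fun_prop) (by ext q; exact hrat q)
  intro t; exact congrFun this t

lemma bern_exp (F : ℝ → ℂ) (hc : Continuous F) (hn : ∀ t, ‖F t‖ = 1)
    (h : ∀ s t, F (s + t) = F s * F t) :
    ∃ a : ℝ, ∀ t : ℝ, F t = Complex.exp (a * t * Complex.I) := by
  have hne : ∀ t, F t ≠ 0 := fun t h0 => by have := hn t; simp [h0] at this
  have h0 : F 0 = 1 := by
    have := h 0 0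
    simp only [add_zero] at this
    exact (mul_left_cancel₀ (hne 0) (by rw [← this, mul_one])).symm
  let Φ : ℝ → ℂ := fun x => ∫ y in (0 : ℝ)..x, F y
  have hΦ : ∀ x, HasDerivAt Φ (F x) x := fun x =>
    intervalIntegral.integral_hasDerivAt_right (hc.intervalIntegrable _ _)
      hc.aestronglyMeasurable.stronglyMeasurableAtFilter hc.continuousAt
  obtain ⟨b, hb⟩ : ∃ b, Φ b ≠ 0 := by
    by_contra! hcon
    have : Φ = fun _ => 0 := funext hcon
    have h1 := hΦ 0
    rw [this, h0] at h1
    exact one_ne_zero (h1.unique (hasDerivAt_const _ _))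
  have key : ∀ t, F t = (Φ (t + b) - Φ t) / Φ b := by
    intro t
    rw [eq_div_iff hb]
    have h1 : Φ (t + b) - Φ t = ∫ y in t..(t + b), F y :=
      intervalIntegral.integral_interval_sub_left (hc.intervalIntegrable _ _) (hc.intervalIntegrable _ _)
    have h2 := intervalIntegral.integral_comp_add_left (a := 0) (b := b) F t
    rw [h1, ← add_zero t, add_assoc, zero_add, ← h2]
    simp only [add_zero, h]
    rw [intervalIntegral.integral_const_mul]
  have hd0 : ∃ α, HasDerivAt F α 0 := by
    have : F = fun t => (Φ (t + b) - Φ t) / Φ b := funext key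
    rw [this]
    exact ⟨_, (((hΦ (0 + b)).comp_add_const 0 b).sub (hΦ 0)).div_const _⟩
  obtain ⟨α, hα⟩ := hd0
  have hd : ∀ t, HasDerivAt F (F t * α) t := by
    intro t
    have h1 : HasDerivAt (fun s => F t * F (s - t)) (F t * α) t := by
      have h2 : HasDerivAt F α (t - t) := by simpa using hα
      exact (h2.comp_sub_const t t).const_mul (F t)
    have : F = fun s => F t * F (s - t) := by
      ext s; rw [← h]; congr 1; ring
    rw [this]
    simpa [h0] using h1
  have hE : ∀ t : ℝ, HasDerivAt (fun t : ℝ => Complex.exp (-(α * t))) (Complex.exp (-(α * t)) * (-α)) t := by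
    intro t
    have h1 : HasDerivAt (fun t : ℝ => -(α * (t : ℂ))) (-α) t := by
      have h2 : HasDerivAt (fun t : ℝ => α * (t : ℂ)) α t := by
        simpa using (Complex.ofRealCLM.hasDerivAt (x := t)).const_mul α
      exact h2.fun_neg
    exact h1.cexp
  have hG : ∀ t : ℝ, HasDerivAt (fun t : ℝ => F t * Complex.exp (-(α * t))) 0 t := by
    intro t
    have h1 := (hd t).fun_mul (hE t)
    have h2 : F t * α * Complex.exp (-(α * t)) + F t * (Complex.exp (-(α * t)) * (-α)) = 0 := by ring
    rwa [h2] at h1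
  have hF : ∀ t : ℝ, F t = Complex.exp (α * t) := by
    intro t
    have := is_const_of_deriv_eq_zero (fun t => (hG t).differentiableAt) (fun t => (hG t).deriv) t 0
    simp [h0, Complex.exp_neg] at this
    have h2 := Complex.exp_ne_zero (α * t)
    field_simp at this
    exact this
  have hre : α.re = 0 := by
    have := hn 1
    rw [hF 1, Complex.norm_exp] at this
    simpa using this
  refine ⟨α.im, fun t => ?_⟩
  rw [hF t]
  congr 1
  apply Complex.ext <;> simp [hre]

lemma bern_core (f g : ℝ → ℂ) (hf : Continuous f) (hg : Continuous g) (f0 : f 0 = 1) (g0 : g 0 = 1)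
    (fc : ∀ t, f (-t) = starRingEnd ℂ (f t)) (gc : ∀ t, g (-t) = starRingEnd ℂ (g t))
    (h : ∀ s t, f (s + t) * g (s - t) = f s * g s * (f t * g (-t))) :
    ∃ a c : ℝ, ∀ t : ℝ, f t = Complex.exp (a * t * Complex.I + c * t ^ 2) := by
  have fd : ∀ t, f (t + t) = f t * f t * (g t * starRingEnd ℂ (g t)) := by
    intro t; have := h t t; simp [g0, gc] at this; rw [this]; ring
  have gd : ∀ t, g (t + t) = g t * g t * (f t * starRingEnd ℂ (f t)) := by
    intro t; have := h t (-t); simp [f0, fc] at this; rw [this]; ring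
  have hnorm : ∀ t, ‖f t‖ = ‖g t‖ := by
    intro t
    rw [← add_halves t, fd, gd]; simp; ring
  have hfne : ∀ t, f t ≠ 0 := by
    intro t ht
    have hz : ∀ n : ℕ, f (t / 2 ^ n) = 0 := by
      intro n
      induction n with
      | zero => simpa using ht
      | succ n ih =>
        have h1 : ‖f (t / 2 ^ n)‖ = 0 := by simp [ih]
        rw [show t / 2 ^ n = t / 2 ^ (n + 1) + t / 2 ^ (n + 1) by field_simp; ring, fd] at h1
        simp only [norm_mul, ← hnorm, RCLike.norm_conj] at h1
        simpa using h1
    have hl : Filter.Tendsto (fun n : ℕ => t / 2 ^ n) Filter.atTop (nhds 0) := by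
      have := (tendsto_pow_atTop_nhds_zero_of_lt_one (r := (1 / 2 : ℝ)) (by norm_num) (by norm_num)).const_mul t
      simpa [div_eq_mul_inv] using this
    have h2 := (hf.tendsto 0).comp hl
    have h3 : (f ∘ fun n : ℕ => t / 2 ^ n) = fun _ => 0 := funext hz
    rw [h3, f0] at h2
    exact zero_ne_one (tendsto_nhds_unique tendsto_const_nhds h2)
  have hgne : ∀ t, g t ≠ 0 := fun t => by
    rw [← norm_ne_zero_iff, ← hnorm, norm_ne_zero_iff]; exact hfne t
  have hfn : ∀ t, ‖f t‖ ≠ 0 := fun t => norm_ne_zero_iff.2 (hfne t)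
  have hq := bern_quad (fun t => Real.log ‖f t‖) (hf.norm.log hfn) (by
    intro s t
    have := congrArg (fun z => Real.log ‖z‖) (h s t)
    simp only [norm_mul, gc, RCLike.norm_conj, ← hnorm] at this
    rw [Real.log_mul (hfn _) (hfn _), Real.log_mul (mul_ne_zero (hfn _) (hfn _)) (mul_ne_zero (hfn _) (hfn _)),
      Real.log_mul (hfn _) (hfn _), Real.log_mul (hfn _) (hfn _)] at this
    linarith)
  have hfnC : ∀ t, (‖f t‖ : ℂ) ≠ 0 := fun t => by exact_mod_cast hfn t
  -- phase
  have hsq : ∀ t, f t * starRingEnd ℂ (f t) = (‖f t‖ : ℂ) ^ 2 := fun t => RCLike.mul_conj _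
  have hsqg : ∀ t, g t * starRingEnd ℂ (g t) = (‖f t‖ : ℂ) ^ 2 := fun t => by
    rw [hnorm]; exact RCLike.mul_conj _
  have hr : ∀ s t, ‖f (s + t)‖ * ‖f (s - t)‖ = ‖f s‖ ^ 2 * ‖f t‖ ^ 2 := by
    intro s t
    have := congrArg norm (h s t)
    simp only [norm_mul, gc, RCLike.norm_conj, ← hnorm] at this
    rw [this]; ring
  let F : ℝ → ℂ := fun t => f t / ‖f t‖
  have Fd : ∀ t, F (t + t) = F t * F t := by
    intro t
    have h1 := hr t t
    simp only [sub_self, f0, norm_one, mul_one] at h1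
    simp only [F]
    rw [h1, fd, hsqg]
    have := hfnC t
    push_cast
    field_simp
  have Fsq : ∀ s t, F (s + t) * F (s + t) = (F s * F t) * (F s * F t) := by
    intro s t
    have h1 := h s t
    have h2 := h t s
    rw [show t - s = -(s - t) by ring, add_comm t s, gc] at h2
    have h3 := congrArg₂ (· * ·) h1 h2
    simp only [gc] at h3
    have e1 : f (s + t) * f (s + t) * (‖f (s - t)‖ : ℂ) ^ 2 =
        (f s * f t) * (f s * f t) * ((‖f s‖ : ℂ) ^ 2 * (‖f t‖ : ℂ) ^ 2) := by
      rw [← hsqg, ← hsqg, ← hsqg]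
      linear_combination h3
    have e2 : (‖f (s + t)‖ : ℂ) * ‖f (s - t)‖ = ‖f s‖ ^ 2 * ‖f t‖ ^ 2 := by exact_mod_cast hr s t
    have n1 := hfnC s
    have n2 := hfnC t
    have n3 := hfnC (s + t)
    have n4 := hfnC (s - t)
    simp only [F]
    rw [div_mul_div_comm, div_mul_div_comm, div_mul_div_comm, div_eq_div_iff (by positivity) (by positivity)]
    apply mul_right_cancel₀ (pow_ne_zero 2 n4)
    linear_combination (‖f s‖ * ‖f t‖ * (‖f s‖ * ‖f t‖) : ℂ) * e1 -
      (f s * f t * (f s * f t)) * (‖f (s + t)‖ * ‖f (s - t)‖ + ‖f s‖ ^ 2 * ‖f t‖ ^ 2 : ℂ) * e2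
  have Fh : ∀ s t, F (s + t) = F s * F t := by
    intro s t
    have h1 := Fsq (s / 2) (t / 2)
    rw [← Fd, mul_mul_mul_comm, ← Fd, ← Fd, add_halves, add_halves] at h1
    rw [← h1]; congr 1; ring
  obtain ⟨a, ha⟩ := bern_exp F (hf.div (Complex.continuous_ofReal.comp hf.norm) hfnC)
    (fun t => by simp [F, hfne]) Fh
  refine ⟨a, Real.log ‖f 1‖, fun t => ?_⟩
  have h1 : f t = F t * ‖f t‖ := by simp only [F]; field_simp [hfnC t]
  have h2 : ‖f t‖ = Real.exp (Real.log ‖f 1‖ * t ^ 2) := by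
    have := hq t
    rw [← this, Real.exp_log (norm_pos_iff.2 (hfne t))]
  rw [h1, ha, h2, Complex.exp_add]
  push_cast
  rfl

lemma bern_gauss (ν : Measure ℝ) [IsProbabilityMeasure ν] (a c : ℝ)
    (h : ∀ t : ℝ, charFun ν t = Complex.exp (a * t * Complex.I + c * t ^ 2)) :
    ∃ (a : ℝ) (v : ℝ≥0), ν = gaussianReal a v := by
  have hc : c ≤ 0 := by
    have h1 := norm_charFun_le_one (μ := ν) 1
    rw [h 1, Complex.norm_exp] at h1
    simpa using h1
  obtain ⟨v, hv⟩ : ∃ v : ℝ≥0, (v : ℝ) = -2 * c := ⟨⟨-2 * c, by linarith⟩, rfl⟩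
  refine ⟨a, v, Measure.ext_of_charFun ?_⟩
  ext t
  have hv' : ((v : ℝ) : ℂ) = -2 * c := by rw [hv]; push_cast; ring
  rw [h, charFun_gaussianReal, hv']
  congr 1
  ring

lemma bern_real {Ω : Type*} [MeasurableSpace Ω]
    (μ : Measure Ω) [IsProbabilityMeasure μ]
    (X Y : Ω → ℝ) (hX : Measurable X) (hY : Measurable Y)
    (hXY : IndepFun X Y μ)
    (hsum : IndepFun (X + Y) (X - Y) μ) :
    (∃ (a : ℝ) (v : ℝ≥0), μ.map X = gaussianReal a v) ∧
    (∃ (a : ℝ) (v : ℝ≥0), μ.map Y = gaussianReal a v) := by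
  have := Measure.isProbabilityMeasure_map (μ := μ) hX.aemeasurable
  have := Measure.isProbabilityMeasure_map (μ := μ) hY.aemeasurable
  have sc : ∀ (Z : Ω → ℝ), Measurable Z → ∀ r : ℝ,
      charFun (μ.map (fun ω => r * Z ω)) 1 = charFun (μ.map Z) r := by
    intro Z hZ r
    have h1 := charFun_map_mul (μ := μ.map Z) r 1
    rw [Measure.map_map (by fun_prop) hZ] at h1
    simpa [Function.comp_def] using h1
  have lin : ∀ (Z W : Ω → ℝ), Measurable Z → Measurable W → IndepFun Z W μ → ∀ r q : ℝ,
      charFun (μ.map (fun ω => r * Z ω + q * W ω)) 1 = charFun (μ.map Z) r * charFun (μ.map W) q := by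
    intro Z W hZ hW hi r q
    have hi' : IndepFun (fun ω => r * Z ω) (fun ω => q * W ω) μ :=
      hi.comp (φ := fun x => r * x) (ψ := fun x => q * x) (by fun_prop) (by fun_prop)
    rw [hi'.charFun_map_fun_add_eq_mul (by fun_prop) (by fun_prop), Pi.mul_apply, sc Z hZ, sc W hW]
  have hadd : ∀ s, charFun (μ.map (X + Y)) s = charFun (μ.map X) s * charFun (μ.map Y) s := by
    intro s
    rw [hXY.charFun_map_add_eq_mul hX.aemeasurable hY.aemeasurable]; rfl
  have hsub : ∀ s, charFun (μ.map (X - Y)) s = charFun (μ.map X) s * charFun (μ.map Y) (-s) := by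
    intro s
    rw [← sc _ (hX.sub hY), ← lin X Y hX hY hXY]
    congr 2; ext ω; simp; ring
  have main : ∀ s t, charFun (μ.map X) (s + t) * charFun (μ.map Y) (s - t) =
      charFun (μ.map X) s * charFun (μ.map Y) s * (charFun (μ.map X) t * charFun (μ.map Y) (-t)) := by
    intro s t
    rw [← hadd, ← hsub, ← lin _ _ (hX.add hY) (hX.sub hY) hsum, ← lin X Y hX hY hXY]
    congr 2; ext ω; simp; ring
  have cX : Continuous (charFun (μ.map X)) := by fun_prop
  have cY : Continuous (charFun (μ.map Y)) := by fun_prop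
  constructor
  · obtain ⟨a, c, h⟩ := bern_core _ _ cX cY (by simp) (by simp)
      (fun t => charFun_neg t) (fun t => charFun_neg t) main
    exact bern_gauss _ a c h
  · obtain ⟨a, c, h⟩ := bern_core _ _ cY cX (by simp) (by simp)
      (fun t => charFun_neg t) (fun t => charFun_neg t) (fun s t => by
        have := main s (-t)
        rw [neg_neg, sub_neg_eq_add, ← sub_eq_add_neg] at this
        linear_combination this)
    exact bern_gauss _ a c h

/-- Bernstein's theorem: If `X, Y` are independent random vectors on `ℝᵐ`
such that `X+Y` and `X−Y` are independent, then `X` and `Y` are Gaussian. -/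
theorem bernstein_theorem {m : ℕ} {Ω : Type*} [MeasurableSpace Ω]
    (μ : Measure Ω) [IsProbabilityMeasure μ]
    (X Y : Ω → EuclideanSpace ℝ (Fin m)) (hX : Measurable X) (hY : Measurable Y)
    (hXY : IndepFun X Y μ)
    (hsum : IndepFun (X + Y) (X - Y) μ) :
    IsGaussianMeasure (μ.map X) ∧ IsGaussianMeasure (μ.map Y) := by
  have key : ∀ u : EuclideanSpace ℝ (Fin m), _ := fun u => by
    have hm : Measurable (fun x : EuclideanSpace ℝ (Fin m) => ⟪u, x⟫) := by fun_prop
    have h2 := hsum.comp hm hm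
    refine bern_real μ (fun ω => ⟪u, X ω⟫) (fun ω => ⟪u, Y ω⟫) (hm.comp hX) (hm.comp hY)
      (hXY.comp hm hm) ?_
    convert h2 using 1
    · ext ω; simp [inner_add_right]
    · ext ω; simp [inner_sub_right]
  have hm : ∀ u, Measurable (fun x : EuclideanSpace ℝ (Fin m) => ⟪u, x⟫) := fun u => by fun_prop
  constructor
  · intro u
    rw [Measure.map_map (hm u) hX]
    exact (key u).1
  · intro u
    rw [Measure.map_map (hm u) hY]
    exact (key u).2
end

section
/- Let Q be a probability measure, f a bounded measurable function with ∫ f dQ = 0, and ε small enough that 1 + εf ≥ 0. Define dP = (1+εf) dQ. Then D(P‖Q) = (ε²/2)·Var_Q(f) + R(ε), where the remainder satisfies |R(ε)| ≤ (ε‖f‖_∞)³ / (6(1 − ε‖f‖_∞)²) for ε‖f‖_∞ < 1. -/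
open MeasureTheory ProbabilityTheory Real
open scoped Classical

/-- Relative entropy `D(P‖Q) = ∫ log(dP/dQ) dP` if `P ≪ Q` (and the integral exists),
and `+∞` otherwise. -/
noncomputable def relEnt {α : Type*} [MeasurableSpace α] (P Q : Measure α) : EReal :=
  if P ≪ Q ∧ Integrable (llr P Q) P then ((∫ x, llr P Q x ∂P : ℝ) : EReal) else ⊤

lemma aux_taylor (x u : ℝ) (hx : |x| ≤ u) (hu : u < 1) :
    |(1 + x) * log (1 + x) - x - x ^ 2 / 2| ≤ u ^ 3 / (6 * (1 - u) ^ 2) := by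
  have hu0 : 0 ≤ u := (abs_nonneg x).trans hx
  have hy : |(-x)| < 1 := by rw [abs_neg]; linarith
  have H := hasSum_pow_div_log_of_abs_lt_one hy
  have H1 := (hasSum_nat_add_iff' 1).mpr H
  have H2 := (hasSum_nat_add_iff' 2).mpr H
  have H3 := (H1.mul_left (-x)).sub H2
  have hG : HasSum (fun n : ℕ => u ^ 3 / 6 * u ^ n) (u ^ 3 / 6 * (1 - u)⁻¹) :=
    (hasSum_geometric_of_lt_one hu0 hu).mul_left _
  have hle : ∀ n : ℕ, ‖-x * ((-x) ^ (n + 1 + 1) / (((n + 1 : ℕ) : ℝ) + 1))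
      - (-x) ^ (n + 2 + 1) / (((n + 2 : ℕ) : ℝ) + 1)‖ ≤ u ^ 3 / 6 * u ^ n := by
    intro n
    have hn : (0 : ℝ) ≤ n := Nat.cast_nonneg n
    have e : -x * ((-x) ^ (n + 1 + 1) / (((n + 1 : ℕ) : ℝ) + 1))
      - (-x) ^ (n + 2 + 1) / (((n + 2 : ℕ) : ℝ) + 1)
      = (-x) ^ (n + 3) * (1 / (((n : ℝ) + 2) * (n + 3))) := by
      push_cast
      have h2 : (n : ℝ) + 1 + 1 ≠ 0 := by positivity
      have h3 : (n : ℝ) + 2 + 1 ≠ 0 := by positivity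
      have h4 : (n : ℝ) + 2 ≠ 0 := by positivity
      have h5 : (n : ℝ) + 3 ≠ 0 := by positivity
      field_simp
      ring
    rw [e, norm_mul, norm_pow, norm_neg, Real.norm_eq_abs, Real.norm_eq_abs,
      abs_of_nonneg (by positivity : (0 : ℝ) ≤ 1 / (((n : ℝ) + 2) * (n + 3)))]
    have h6 : 1 / (((n : ℝ) + 2) * (n + 3)) ≤ 1 / 6 := by
      apply one_div_le_one_div_of_le (by norm_num)
      nlinarith
    calc |x| ^ (n + 3) * (1 / (((n : ℝ) + 2) * (n + 3))) ≤ u ^ (n + 3) * (1 / 6) := by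
          gcongr
      _ = u ^ 3 / 6 * u ^ n := by ring
  have hfin := tsum_of_norm_bounded hG hle
  rw [H3.tsum_eq] at hfin
  have e2 : -x * (-log (1 - -x) - ∑ i ∈ Finset.range 1, (-x) ^ (i + 1) / ((i : ℝ) + 1))
      - (-log (1 - -x) - ∑ i ∈ Finset.range 2, (-x) ^ (i + 1) / ((i : ℝ) + 1))
      = (1 + x) * log (1 + x) - x - x ^ 2 / 2 := by
    simp only [Finset.sum_range_succ, Finset.sum_range_zero, sub_neg_eq_add]
    push_cast
    ring
  rw [e2, Real.norm_eq_abs] at hfin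
  refine hfin.trans ?_
  have h1 : 0 < 1 - u := by linarith
  rw [← div_eq_mul_inv, div_div]
  apply div_le_div_of_nonneg_left (by positivity) (by positivity)
  nlinarith

/-- For `dP = (1 + εf) dQ` with `f` bounded, `∫ f dQ = 0` and `ε‖f‖_∞ < 1`,
`D(P‖Q) = (ε²/2) Var_Q(f) + R(ε)` with `|R(ε)| ≤ (ε‖f‖_∞)³ / (6 (1 − ε‖f‖_∞)²)`. -/
theorem relEnt_perturbation_expansion {α : Type*} [MeasurableSpace α]
    (Q : Measure α) [IsProbabilityMeasure Q]
    (f : α → ℝ) (hf : Measurable f) (B : ℝ) (hB : ∀ x, |f x| ≤ B)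
    (hmean : ∫ x, f x ∂Q = 0)
    (ε : ℝ) (hε : |ε| * B < 1) (hpos : ∀ x, 0 ≤ 1 + ε * f x) :
    ∃ R : ℝ,
      relEnt (Q.withDensity (fun x => ENNReal.ofReal (1 + ε * f x))) Q
          = ((ε ^ 2 / 2 * variance f Q + R : ℝ) : EReal) ∧
      |R| ≤ (|ε| * B) ^ 3 / (6 * (1 - |ε| * B) ^ 2) := by
  have hC : ∀ x, |ε * f x| ≤ |ε| * B := fun x => by
    rw [abs_mul]; exact mul_le_mul_of_nonneg_left (hB x) (abs_nonneg _)
  have hlow : ∀ x, 1 - |ε| * B ≤ 1 + ε * f x := fun x => by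
    have := (abs_le.mp (hC x)).1; linarith
  have hup : ∀ x, ε * f x ≤ |ε| * B := fun x => (abs_le.mp (hC x)).2
  have hlogb : ∀ x, ‖log (1 + ε * f x)‖ ≤ |log (1 - |ε| * B)| + |ε| * B := by
    intro x
    have h1 : log (1 - |ε| * B) ≤ log (1 + ε * f x) :=
      Real.log_le_log (by linarith) (hlow x)
    have h2 : log (1 + ε * f x) ≤ (1 + ε * f x) - 1 :=
      Real.log_le_sub_one_of_pos (by linarith [hlow x])
    have h3 := neg_abs_le (log (1 - |ε| * B))
    have h4 := abs_nonneg (log (1 - |ε| * B))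
    have h5 := (abs_nonneg _).trans (hC x)
    have h6 := hup x
    rw [Real.norm_eq_abs, abs_le]
    constructor <;> linarith
  have hmd : Measurable (fun x => 1 + ε * f x) := by fun_prop
  have hml : Measurable (fun x => log (1 + ε * f x)) := hmd.log
  have hfi : Integrable f Q := Integrable.of_bound hf.aestronglyMeasurable B
    (Filter.Eventually.of_forall hB)
  have hf2 : Integrable (fun x => f x ^ 2) Q := by
    refine Integrable.of_bound (hf.pow_const 2).aestronglyMeasurable (B ^ 2)
      (Filter.Eventually.of_forall fun x => ?_)
    rw [norm_pow]
    exact pow_le_pow_left₀ (norm_nonneg _) (hB x) 2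
  have hgm : Measurable (fun x => (1 + ε * f x) * log (1 + ε * f x) - ε * f x
      - (ε * f x) ^ 2 / 2) := by fun_prop
  have hgb : ∀ x, ‖(1 + ε * f x) * log (1 + ε * f x) - ε * f x - (ε * f x) ^ 2 / 2‖
      ≤ (|ε| * B) ^ 3 / (6 * (1 - |ε| * B) ^ 2) := fun x => aux_taylor _ _ (hC x) hε
  have hgi : Integrable (fun x => (1 + ε * f x) * log (1 + ε * f x) - ε * f x
      - (ε * f x) ^ 2 / 2) Q := Integrable.of_bound hgm.aestronglyMeasurable _
    (Filter.Eventually.of_forall hgb)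
  have hdi : Integrable (fun x => 1 + ε * f x) Q := (integrable_const 1).add (hfi.const_mul ε)
  have hmE : Measurable (fun x => ENNReal.ofReal (1 + ε * f x)) := hmd.ennreal_ofReal
  set P := Q.withDensity (fun x => ENNReal.ofReal (1 + ε * f x)) with hP
  have hac : P ≪ Q := withDensity_absolutelyContinuous _ _
  have : IsFiniteMeasure P := isFiniteMeasure_withDensity_ofReal hdi.2
  have hllr : llr P Q =ᵐ[P] fun x => log (1 + ε * f x) := by
    apply hac.ae_le
    filter_upwards [Measure.rnDeriv_withDensity Q hmE] with x hx
    rw [llr, hP, hx, ENNReal.toReal_ofReal (hpos x)]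
  have hint : Integrable (llr P Q) P :=
    (Integrable.of_bound hml.aestronglyMeasurable _
      (Filter.Eventually.of_forall hlogb)).congr hllr.symm
  refine ⟨∫ x, ((1 + ε * f x) * log (1 + ε * f x) - ε * f x - (ε * f x) ^ 2 / 2) ∂Q, ?_, ?_⟩
  · rw [relEnt, if_pos ⟨hac, hint⟩, integral_congr_ae hllr, hP,
      integral_withDensity_eq_integral_toReal_smul hmE
        (Filter.Eventually.of_forall fun x => ENNReal.ofReal_lt_top),
      variance_of_integral_eq_zero hf.aemeasurable hmean]
    congr 1
    have e : ∀ x, (ENNReal.ofReal (1 + ε * f x)).toReal • log (1 + ε * f x)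
        = (((1 + ε * f x) * log (1 + ε * f x) - ε * f x - (ε * f x) ^ 2 / 2) + ε * f x)
          + ε ^ 2 / 2 * f x ^ 2 := fun x => by
      rw [ENNReal.toReal_ofReal (hpos x), smul_eq_mul]; ring
    simp_rw [e]
    have hs : Integrable (fun x => ((1 + ε * f x) * log (1 + ε * f x) - ε * f x
        - (ε * f x) ^ 2 / 2) + ε * f x) Q := hgi.add (hfi.const_mul ε)
    rw [integral_add hs (hf2.const_mul _),
      integral_add hgi (hfi.const_mul ε), integral_const_mul, integral_const_mul, hmean]
    ring
  · have := norm_integral_le_of_norm_le_const (μ := Q) (Filter.Eventually.of_forall hgb)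
    simpa using this
end
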